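/- arXiv:math/0002217 — 2 statements merged into one kernel-verified Lean document; each statement's English description precedes it below -/
import Mathlib

section
/- Any countably generated projective module over a local ring is free; consequently every projective module over a local ring is free. -/
universe u

theorem kap_dedekind {R : Type*} [Ring R] [IsLocalRing R] {a b : R} (h : b * a = 1) :
    a * b = 1 := by
  have he : (a * b) * (a * b) = a * b := by
    calc (a * b) * (a * b) = a * (b * a) * b := by noncomm_ring
      _ = a * b := by rw [h, mul_one]
  rcases IsLocalRing.isUnit_or_isUnit_of_add_one (show a * b + (1 - a * b) = 1 by abel) with hu | hu
  · exact hu.mul_left_cancel (by rw [he, mul_one])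
  · have h0 : a * b = 0 := by
      apply hu.mul_left_cancel
      rw [sub_mul, he, one_mul, sub_self, mul_zero]
    exfalso
    have : (1 : R) = 0 := by
      calc (1 : R) = (b * a) * (b * a) := by rw [h, mul_one]
        _ = b * (a * b) * a := by noncomm_ring
        _ = 0 := by rw [h0]; simp
    exact one_ne_zero this

theorem kap_nonunit_jac {R : Type*} [Ring R] [IsLocalRing R] {x : R} (hx : ¬ IsUnit x) :
    x ∈ (⊥ : Ideal R).jacobson := by
  rw [Ideal.mem_jacobson_iff]
  intro y
  have h1 : ¬ IsUnit (-(y * x)) := by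
    rw [IsUnit.neg_iff]
    rintro ⟨u, hu⟩
    apply hx
    have h2 : (↑u⁻¹ * y) * x = 1 := by rw [mul_assoc, ← hu, Units.inv_mul]
    exact ⟨⟨x, ↑u⁻¹ * y, kap_dedekind h2, h2⟩, rfl⟩
  rcases IsLocalRing.isUnit_or_isUnit_of_add_one
    (show -(y * x) + (1 + y * x) = 1 by abel) with hu | hu
  · exact absurd hu h1
  · obtain ⟨u, hu⟩ := hu
    refine ⟨↑u⁻¹, ?_⟩
    rw [Submodule.mem_bot, mul_assoc, sub_eq_zero]
    calc ↑u⁻¹ * (y * x) + ↑u⁻¹ = ↑u⁻¹ * (1 + y * x) := by noncomm_ring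
      _ = 1 := by rw [← hu, Units.inv_mul]

theorem kap_matrix {R : Type*} [Ring R] [IsLocalRing R] {n : Type*} [Fintype n] [DecidableEq n]
    (C : Matrix n n R) (hC : ∀ i j, ¬ IsUnit ((C - 1) i j)) : ∃ Z, C * Z = 1 := by
  have hm : C - 1 ∈ (⊥ : Ideal (Matrix n n R)).jacobson := by
    have : C - 1 ∈ ((⊥ : Ideal R).jacobson).matrix n := by
      rw [Ideal.mem_matrix]
      exact fun i j => kap_nonunit_jac (hC i j)
    have := Ideal.matrix_jacobson_le _ this
    rwa [Ideal.matrix_bot] at this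
  obtain ⟨Z, hZ⟩ := Ideal.exists_mul_sub_mem_of_sub_one_mem_jacobson _ hm
  rw [Submodule.mem_bot, sub_eq_zero] at hZ
  have hZ1 : Z - 1 ∈ (⊥ : Ideal (Matrix n n R)).jacobson := by
    have : Z - 1 = (-Z) * (C - 1) := by rw [mul_sub, neg_mul, hZ]; simp; abel
    rw [this]
    exact Ideal.mul_mem_left _ _ hm
  obtain ⟨W, hW⟩ := Ideal.exists_mul_sub_mem_of_sub_one_mem_jacobson _ hZ1
  rw [Submodule.mem_bot, sub_eq_zero] at hW
  refine ⟨Z, ?_⟩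
  have : W = C := by
    calc W = W * (Z * C) := by rw [hZ, mul_one]
      _ = C := by rw [← mul_assoc, hW, one_mul]
  rwa [← this]

/-- Core lemma. -/
theorem kap_A {R : Type*} [Ring R] [IsLocalRing R] {P : Type*} [AddCommGroup P] [Module R P]
    [Module.Projective R P] (x : P) :
    ∃ T : Set P, LinearIndepOn R id T ∧ x ∈ Submodule.span R T ∧
      ∃ N, IsCompl (Submodule.span R T) N := by
  classical
  have hex : ∃ n : ℕ, ∃ (f : P →ₗ[R] (P →₀ R)) (g : (P →₀ R) →ₗ[R] P),
      (∀ p, g (f p) = p) ∧ (f x).support.card = n := by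
    obtain ⟨s, hs⟩ := (Module.projective_def (R := R) (P := P)).1 inferInstance
    exact ⟨_, s, Finsupp.linearCombination R id, hs, rfl⟩
  obtain ⟨f, g, hgf, hcard⟩ := Nat.find_spec hex
  have hmin : ∀ (f : P →ₗ[R] (P →₀ R)) (g : (P →₀ R) →ₗ[R] P), (∀ p, g (f p) = p) →
      Nat.find hex ≤ (f x).support.card := fun f g h => Nat.find_min' hex ⟨f, g, h, rfl⟩
  rw [← hcard] at hmin
  set a := f x with ha
  -- no nontrivial relation with a unit coefficient
  have hrel : ∀ d : P → R, (∑ i ∈ a.support, a i * d i = 0) →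
      ∀ k ∈ a.support, ¬ IsUnit (d k) := by
    rintro d hd k hk ⟨u, hu⟩
    let b : P → R := fun i => if i = k then 0 else - (d i * ↑u⁻¹)
    have hb : ∑ i ∈ a.support, a i * b i = a k := by
      rw [← Finset.add_sum_erase _ _ hk] at hd ⊢
      have h1 : ∑ i ∈ a.support.erase k, a i * b i
          = - ((∑ i ∈ a.support.erase k, a i * d i) * ↑u⁻¹) := by
        rw [Finset.sum_mul, ← Finset.sum_neg_distrib]
        refine Finset.sum_congr rfl fun i hi => ?_
        simp [b, Finset.ne_of_mem_erase hi, mul_assoc]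
      rw [h1, eq_neg_of_add_eq_zero_right hd, ← hu]
      simp [b, mul_assoc]
    let L : (P →₀ R) →ₗ[R] R := Finsupp.linearCombination R b
    let N : (P →₀ R) →ₗ[R] (P →₀ R) := (Finsupp.lsingle k) ∘ₗ L
    have hL : L a = a k := by
      rw [← hb]; simp [L, Finsupp.linearCombination_apply, Finsupp.sum]
    have hLk : ∀ r, L (Finsupp.single k r) = 0 := by
      intro r; simp [L, b]
    have := hmin (f - N ∘ₗ f) (g + g ∘ₗ N) (by
      intro p
      simp [hgf, N, hLk])
    have h2 : (f - N ∘ₗ f) x = a.erase k := by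
      rw [Finsupp.erase_eq_sub_single]
      simp [N, ← ha, hL]
    rw [h2, Finsupp.support_erase, Finset.card_erase_of_mem hk] at this
    have := Finset.card_pos.2 ⟨k, hk⟩
    omega
  let S := a.support
  let y : S → P := fun s => g (Finsupp.single s.1 1)
  let φ : P →ₗ[R] (S → R) := LinearMap.pi fun s => (Finsupp.lapply s.1) ∘ₗ f
  let C : Matrix S S R := Matrix.of fun i j => φ (y i) j
  have hxa : x = ∑ i ∈ S, a i • g (Finsupp.single i 1) := by
    conv_lhs => rw [← hgf x, ← ha, ← Finsupp.sum_single a]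
    simp [Finsupp.sum, S, map_sum, ← map_smul]
  have hC : ∀ i j, ¬ IsUnit ((C - 1) i j) := by
    intro i j
    have := hrel (fun k => f (g (Finsupp.single k 1)) j.1 - if k = j.1 then 1 else 0) (by
      have h3 : a j.1 = ∑ i ∈ S, a i * f (g (Finsupp.single i 1)) j.1 := by
        conv_lhs => rw [ha, hxa]
        simp [map_sum, Finsupp.finsetSum_apply]
      simp only [mul_sub, Finset.sum_sub_distrib]
      rw [sub_eq_zero, ← h3]
      simp) i.1 i.2
    convert this using 2
    rw [Matrix.sub_apply, Matrix.one_apply]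
    congr 1
    by_cases h : i = j
    · rw [if_pos h, if_pos (congrArg Subtype.val h)]
    · rw [if_neg h, if_neg (fun h' => h (Subtype.ext h'))]
  obtain ⟨Z, hZ⟩ := kap_matrix C hC
  let Y : (S → R) →ₗ[R] P := Fintype.linearCombination R y
  let Ψ : P →ₗ[R] (S → R) := Z.toLinearMapRight' ∘ₗ φ
  have hY : φ ∘ₗ Y = C.toLinearMapRight' := by
    apply LinearMap.ext
    intro v
    funext j
    rw [LinearMap.comp_apply, Matrix.toLinearMapRight'_apply, Fintype.linearCombination_apply,
      map_sum, Finset.sum_apply]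
    refine Finset.sum_congr rfl fun i _ => ?_
    rw [map_smul]
    rfl
  have hΨ : ∀ v, Ψ (Y v) = v := by
    intro v
    have : Ψ ∘ₗ Y = LinearMap.id := by
      rw [LinearMap.comp_assoc, hY, ← Matrix.toLinearMapRight'_mul, hZ, Matrix.toLinearMapRight'_one]
    exact LinearMap.congr_fun this v
  have hspan : Submodule.span R (Set.range y) = LinearMap.range Y :=
    (Fintype.range_linearCombination R y).symm
  refine ⟨Set.range y, ?_, ?_, LinearMap.ker Ψ, ?_⟩
  · apply LinearIndependent.linearIndepOn_id
    rw [linearIndependent_iff_injective_fintypeLinearCombination]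
    exact Function.LeftInverse.injective hΨ
  · suffices h : (∑ i ∈ S, a i • g (Finsupp.single i 1)) ∈ Submodule.span R (Set.range y) by
      rwa [← hxa] at h
    exact Submodule.sum_mem _ fun i hi => Submodule.smul_mem _ _
      (Submodule.subset_span ⟨⟨i, hi⟩, rfl⟩)
  · rw [hspan]
    constructor
    · rw [Submodule.disjoint_def]
      rintro _ ⟨v, rfl⟩ hv
      rw [LinearMap.mem_ker, hΨ] at hv
      rw [hv, map_zero]
    · rw [codisjoint_iff, eq_top_iff]
      intro p _
      rw [Submodule.mem_sup]
      exact ⟨Y (Ψ p), ⟨_, rfl⟩, p - Y (Ψ p), by simp [hΨ], by abel⟩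

theorem kap_step {R : Type*} [Ring R] [IsLocalRing R] {P : Type*} [AddCommGroup P] [Module R P]
    [Module.Projective R P] (T : Set P) (hT : LinearIndepOn R id T)
    (hN : ∃ N, IsCompl (Submodule.span R T) N) (x : P) :
    ∃ T' : Set P, T ⊆ T' ∧ x ∈ Submodule.span R T' ∧ LinearIndepOn R id T' ∧
      ∃ N, IsCompl (Submodule.span R T') N := by
  obtain ⟨N, hN⟩ := hN
  have : Module.Projective R N :=
    Module.Projective.of_split N.subtype (Submodule.projectionOnto N _ hN.symm) (by
      ext p; simp [Submodule.projectionOnto_apply_left])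
  obtain ⟨t, ht, n, hn, rfl⟩ := Submodule.mem_sup.1
    (show x ∈ Submodule.span R T ⊔ N by rw [hN.sup_eq_top]; trivial)
  obtain ⟨T1, hT1, hx, N1, hN1⟩ := kap_A (R := R) (⟨n, hn⟩ : N)
  have hsp : Submodule.span R (T ∪ N.subtype '' T1)
      = Submodule.span R T ⊔ (Submodule.span R T1).map N.subtype := by
    rw [Submodule.span_union, Submodule.map_span]
  have hsup : (Submodule.span R T1).map N.subtype ⊔ N1.map N.subtype = N := by
    rw [← Submodule.map_sup, hN1.sup_eq_top]; simp
  have hdis : Disjoint ((Submodule.span R T1).map N.subtype) (N1.map N.subtype) :=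
    Submodule.disjoint_map N.injective_subtype hN1.disjoint
  refine ⟨T ∪ N.subtype '' T1, Set.subset_union_left, ?_, ?_, N1.map N.subtype, ?_⟩
  · rw [hsp]
    exact Submodule.add_mem_sup ht ⟨_, hx, rfl⟩
  · apply LinearIndepOn.id_union hT
    · exact hT1.id_imageₛ N.injective_subtype.injOn
    · rw [← Submodule.map_span]
      exact hN.disjoint.mono_right (Submodule.map_subtype_le _ _)
  · rw [hsp]
    constructor
    · apply Disjoint.disjoint_sup_left_of_disjoint_sup_right hdis
      rw [hsup]; exact hN.disjoint
    · rw [codisjoint_iff, sup_assoc, hsup, hN.sup_eq_top]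

theorem kap_free {R : Type*} [Ring R] {P : Type*} [AddCommGroup P] [Module R P] (T : Set P)
    (h : LinearIndepOn R id T) (hs : Submodule.span R T = ⊤) : Module.Free R P :=
  Module.Free.of_basis (Module.Basis.mk (v := fun t : T => (t : P)) h (by simp [hs]))

theorem kap_countable {R : Type*} [Ring R] [IsLocalRing R] {P : Type*} [AddCommGroup P]
    [Module R P] [Module.Projective R P] (s : Set P) (hs : s.Countable)
    (hsp : Submodule.span R s = ⊤) : Module.Free R P := by
  have hs0 : (insert 0 s).Countable := hs.insert 0
  obtain ⟨p, hp⟩ := hs0.exists_eq_range (Set.insert_nonempty _ _)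
  let St := {T : Set P // LinearIndepOn R id T ∧ ∃ N, IsCompl (Submodule.span R T) N}
  have hstep : ∀ (T : St) (x : P), ∃ T' : St, T.1 ⊆ T'.1 ∧ x ∈ Submodule.span R T'.1 := by
    intro T x
    obtain ⟨T', h1, h2, h3, h4⟩ := kap_step (R := R) T.1 T.2.1 T.2.2 x
    exact ⟨⟨T', h3, h4⟩, h1, h2⟩
  choose nx h1 h2 using hstep
  let T0 : St := ⟨∅, linearIndepOn_empty R id, ⊤, by simpa using isCompl_bot_top⟩
  let Q : ℕ → St := fun n => Nat.rec T0 (fun k T => nx T (p k)) n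
  have hQ : ∀ k, Q (k+1) = nx (Q k) (p k) := fun k => rfl
  have hmono : Monotone fun k => (Q k).1 := monotone_nat_of_le_succ fun k => by
    rw [hQ]; exact h1 _ _
  refine kap_free (⋃ k, (Q k).1) (linearIndepOn_iUnion_of_directed hmono.directed_le
    fun k => (Q k).2.1) ?_
  rw [eq_top_iff, ← hsp, Submodule.span_le]
  intro x hx
  have : x ∈ Set.range p := hp ▸ Set.mem_insert_of_mem _ hx
  obtain ⟨k, rfl⟩ := this
  exact Submodule.span_mono (Set.subset_iUnion _ (k+1)) (by rw [hQ]; exact h2 _ _)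

theorem kap_proj {R : Type*} [Ring R] {ι : Type*} (I : Set ι) :
    ∃ π : (ι →₀ R) →ₗ[R] (ι →₀ R), (∀ v, π v ∈ Finsupp.supported R R I) ∧
      (∀ v ∈ Finsupp.supported R R I, π v = v) := by
  classical
  refine ⟨(Finsupp.supported R R I).subtype ∘ₗ Finsupp.restrictDom R R I, fun v => ?_,
    fun v hv => ?_⟩
  · exact (Finsupp.restrictDom R R I v).2
  · simp only [LinearMap.comp_apply, Submodule.subtype_apply, Finsupp.restrictDom_apply]
    rw [Finsupp.filter_eq_self_iff]
    intro i hi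
    exact (Finsupp.mem_supported R v).1 hv (Finsupp.mem_support_iff.2 hi)

theorem kap_stable {R : Type*} [Ring R] {ι : Type*} (E : (ι →₀ R) →ₗ[R] (ι →₀ R)) (I : Set ι)
    (hI : ∀ i ∈ I, ((E (Finsupp.single i 1)).support : Set ι) ⊆ I) :
    ∀ v ∈ Finsupp.supported R R I, E v ∈ Finsupp.supported R R I := by
  intro v hv
  rw [Finsupp.supported_eq_span_single] at hv
  refine (Submodule.span_le (p := (Finsupp.supported R R I).comap E)).2 ?_ hv
  rintro _ ⟨i, hi, rfl⟩
  exact hI i hi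

theorem kap_extend {R : Type*} [Ring R] [IsLocalRing R] {ι : Type*}
    (E : (ι →₀ R) →ₗ[R] (ι →₀ R)) (hE : ∀ v, E (E v) = E v) (I J : Set ι) (hIJ : I ⊆ J)
    (hI : ∀ v ∈ Finsupp.supported R R I, E v ∈ Finsupp.supported R R I)
    (hJ : ∀ v ∈ Finsupp.supported R R J, E v ∈ Finsupp.supported R R J)
    (hc : (J \ I).Countable) (B : Set (ι →₀ R)) (hB : LinearIndepOn R id B)
    (hspB : Submodule.span R B = (Finsupp.supported R R I).map E) :
    ∃ B' : Set (ι →₀ R), B ⊆ B' ∧ LinearIndepOn R id B' ∧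
      Submodule.span R B' = (Finsupp.supported R R J).map E := by
  obtain ⟨πI, hI1, hI2⟩ := kap_proj (R := R) I
  obtain ⟨πJ, hJ1, hJ2⟩ := kap_proj (R := R) J
  have hFIJ : Finsupp.supported R R I ≤ Finsupp.supported R R J := Finsupp.supported_mono hIJ
  -- the map onto the complement
  let τ : (ι →₀ R) →ₗ[R] (ι →₀ R) := (E - E ∘ₗ πI ∘ₗ E) ∘ₗ πJ
  have hτ : ∀ v, τ v = E (πJ v) - E (πI (E (πJ v))) := fun v => rfl
  have hτJ : ∀ v, τ v ∈ Finsupp.supported R R J := fun v =>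
    Submodule.sub_mem _ (hJ _ (hJ1 _)) (hFIJ (hI _ (hI1 _)))
  have hEτ : ∀ v, E (τ v) = τ v := by
    intro v; rw [hτ, map_sub, hE, hE]
  have hρτ : ∀ v, E (πI (τ v)) = 0 := by
    intro v
    rw [hτ, map_sub, map_sub, hI2 _ (hI _ (hI1 (E (πJ v)))), hE, sub_self]
  have hττ : ∀ v, τ (τ v) = τ v := by
    intro v
    rw [hτ (τ v), hJ2 _ (hτJ v), hEτ, hρτ, sub_zero]
  have hτI : ∀ v ∈ Finsupp.supported R R I, τ v = 0 := by
    intro v hv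
    rw [hτ, hJ2 _ (hFIJ hv), hI2 _ (hI _ hv), hE, sub_self]
  let K := LinearMap.range τ
  have hKp : Module.Projective R K :=
    Module.Projective.of_split K.subtype τ.rangeRestrict (by
      ext ⟨_, v, rfl⟩ : 1
      exact Subtype.ext (hττ v))
  have hKfree : Module.Free R K := by
    refine kap_countable ((fun i => τ.rangeRestrict (Finsupp.single i 1)) '' (J \ I))
      (hc.image _) ?_
    rw [eq_top_iff]
    rintro ⟨_, v, rfl⟩ _
    have h1 : τ.rangeRestrict v = τ.rangeRestrict (πJ v) := by
      apply Subtype.ext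
      change τ v = τ (πJ v)
      rw [hτ, hτ, hJ2 _ (hJ1 v)]
    change τ.rangeRestrict v ∈ _
    rw [h1]
    have h2 := hJ1 v
    rw [Finsupp.supported_eq_span_single] at h2
    rw [← Submodule.mem_comap]
    refine Submodule.span_le.2 ?_ h2
    rintro _ ⟨j, hj, rfl⟩
    rw [SetLike.mem_coe, Submodule.mem_comap]
    by_cases hjI : j ∈ I
    · have : τ.rangeRestrict (Finsupp.single j (1 : R)) = 0 :=
        Subtype.ext (hτI _ (Finsupp.single_mem_supported R _ hjI))
      rw [this]
      exact Submodule.zero_mem _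
    · exact Submodule.subset_span ⟨j, ⟨hj, hjI⟩, rfl⟩
  obtain ⟨⟨κ, b⟩⟩ := hKfree.exists_basis
  let B1 : Set (ι →₀ R) := K.subtype '' Set.range b
  have hB1 : LinearIndepOn R id B1 :=
    b.linearIndependent.linearIndepOn_id.id_imageₛ K.injective_subtype.injOn
  have hspB1 : Submodule.span R B1 = K := by
    rw [← Submodule.map_span, b.span_eq]; simp
  refine ⟨B ∪ B1, Set.subset_union_left, hB.id_union hB1 ?_, ?_⟩
  · rw [hspB, hspB1, Submodule.disjoint_def]
    rintro _ ⟨w, hw, rfl⟩ ⟨v, hv⟩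
    have := hρτ v
    rwa [hv, hI2 _ (hI _ hw), hE] at this
  · rw [Submodule.span_union, hspB, hspB1]
    apply le_antisymm
    · apply sup_le (Submodule.map_mono hFIJ)
      rintro _ ⟨v, rfl⟩
      exact ⟨τ v, hτJ v, hEτ v⟩
    · rintro _ ⟨v, hv, rfl⟩
      rw [Submodule.mem_sup]
      exact ⟨E (πI (E v)), ⟨_, hI1 _, rfl⟩, τ v, ⟨v, rfl⟩, by rw [hτ, hJ2 _ hv]; abel⟩

theorem kap_closure {R : Type*} [Ring R] {ι : Type*} (E : (ι →₀ R) →ₗ[R] (ι →₀ R)) (i : ι) :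
    ∃ C : Set ι, i ∈ C ∧ C.Countable ∧
      ∀ j ∈ C, ((E (Finsupp.single j 1)).support : Set ι) ⊆ C := by
  let A : ℕ → Set ι := fun n => Nat.rec {i}
    (fun _ S => ⋃ j ∈ S, ((E (Finsupp.single j 1)).support : Set ι)) n
  have hA : ∀ n, A (n+1) = ⋃ j ∈ A n, ((E (Finsupp.single j 1)).support : Set ι) := fun n => rfl
  refine ⟨⋃ n, A n, Set.mem_iUnion.2 ⟨0, rfl⟩, Set.countable_iUnion fun n => ?_, ?_⟩
  · induction n with
    | zero => exact Set.countable_singleton i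
    | succ n ih =>
      rw [hA]
      exact ih.biUnion fun j _ => Finset.countable_toSet _
  · intro j hj k hk
    obtain ⟨n, hn⟩ := Set.mem_iUnion.1 hj
    exact Set.mem_iUnion.2 ⟨n+1, by rw [hA]; exact Set.mem_biUnion hn hk⟩

theorem kap_idem {R : Type*} [Ring R] [IsLocalRing R] {ι : Type*}
    (E : (ι →₀ R) →ₗ[R] (ι →₀ R)) (hE : ∀ v, E (E v) = E v) :
    ∃ B : Set (ι →₀ R), LinearIndepOn R id B ∧ Submodule.span R B = LinearMap.range E := by
  let G : Set (Set ι × Set (ι →₀ R)) := {X |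
    (∀ i ∈ X.1, ((E (Finsupp.single i 1)).support : Set ι) ⊆ X.1) ∧
    LinearIndepOn R id X.2 ∧ Submodule.span R X.2 = (Finsupp.supported R R X.1).map E}
  obtain ⟨M, hM⟩ : ∃ M, Maximal (· ∈ G) M := by
    apply zorn_le₀
    intro c hc hch
    have hd1 : DirectedOn (· ≤ ·) c := hch.directedOn
    refine ⟨(⋃ X ∈ c, X.1, ⋃ X ∈ c, X.2), ⟨?_, ?_, ?_⟩, ?_⟩
    · intro i hi
      simp only [Set.mem_iUnion] at hi
      obtain ⟨X, hX, hi⟩ := hi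
      exact ((hc hX).1 i hi).trans (Set.subset_biUnion_of_mem (u := fun X => X.1) hX)
    · apply linearIndepOn_biUnion_of_directed
      · intro X hX Y hY
        obtain ⟨Z, hZ, h1, h2⟩ := hd1 X hX Y hY
        exact ⟨Z, hZ, h1.2, h2.2⟩
      · exact fun X hX => (hc hX).2.1
    · simp only [Set.biUnion_eq_iUnion, Submodule.span_iUnion, Finsupp.supported_iUnion,
        Submodule.map_iSup]
      exact iSup_congr fun X => (hc X.2).2.2
    · intro X hX
      exact ⟨Set.subset_biUnion_of_mem (u := fun X => X.1) hX,
        Set.subset_biUnion_of_mem (u := fun X => X.2) hX⟩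
  obtain ⟨h1, h2, h3⟩ := hM.prop
  have huniv : M.1 = Set.univ := by
    rw [Set.eq_univ_iff_forall]
    intro i
    obtain ⟨C, hiC, hCc, hCs⟩ := kap_closure E i
    have hJ : ∀ j ∈ M.1 ∪ C, ((E (Finsupp.single j 1)).support : Set ι) ⊆ M.1 ∪ C := by
      rintro j (hj | hj)
      · exact (h1 j hj).trans Set.subset_union_left
      · exact (hCs j hj).trans Set.subset_union_right
    obtain ⟨B', hB1, hB2, hB3⟩ := kap_extend E hE M.1 (M.1 ∪ C) Set.subset_union_left
      (kap_stable E _ h1) (kap_stable E _ hJ)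
      (hCc.mono (by rintro j ⟨hj | hj, hj'⟩; exacts [absurd hj hj', hj])) M.2 h2 h3
    have := hM.le_of_ge (y := (M.1 ∪ C, B')) ⟨hJ, hB2, hB3⟩ ⟨Set.subset_union_left, hB1⟩
    exact this.1 (Or.inr hiC)
  refine ⟨M.2, h2, ?_⟩
  rw [h3, huniv, Finsupp.supported_univ, Submodule.map_top]

theorem kap_all {R : Type*} [Ring R] [IsLocalRing R] {P : Type*} [AddCommGroup P]
    [Module R P] [Module.Projective R P] : Module.Free R P := by
  obtain ⟨s, hs⟩ := (Module.projective_def (R := R) (P := P)).1 inferInstance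
  let g : (P →₀ R) →ₗ[R] P := Finsupp.linearCombination R id
  have hg : ∀ p, g (s p) = p := hs
  obtain ⟨B, hB, hsp⟩ := kap_idem (s ∘ₗ g) (fun v => by simp [hg])
  have hle : LinearMap.range (s ∘ₗ g) ≤ LinearMap.range s := LinearMap.range_comp_le_range g s
  refine kap_free (g '' B) (hB.id_imageₛ ?_) ?_
  · rw [hsp]
    intro v hv w hw h
    obtain ⟨v, rfl⟩ := hle hv
    obtain ⟨w, rfl⟩ := hle hw
    rw [hg, hg] at h
    rw [h]
  · rw [← Submodule.map_span, hsp, eq_top_iff]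
    intro p _
    exact ⟨s p, ⟨s p, by simp [hg]⟩, hg p⟩

/-- Kaplansky: over a local ring, countably generated projective modules are free;
consequently all projective modules are free. -/
theorem kaplansky_local_projective_free (R : Type u) [Ring R] [IsLocalRing R] :
    (∀ (P : Type u) [AddCommGroup P] [Module R P], Module.Projective R P →
      (∃ s : Set P, s.Countable ∧ Submodule.span R s = ⊤) → Module.Free R P) ∧
    (∀ (P : Type u) [AddCommGroup P] [Module R P], Module.Projective R P →
      Module.Free R P) := by
  refine ⟨fun P _ _ hP ⟨s, hs, hsp⟩ => ?_, fun P _ _ hP => ?_⟩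
  · exact kap_countable s hs hsp
  · exact kap_all
end

section
/- A finite group ring over a Dedekind domain has left self-injective dimension at most 1: for R = kG with k a Dedekind domain and G a finite group, id(R as left R-module) ≤ 1. -/
universe u

open MonoidAlgebra in
theorem aux_equivariant {k G P : Type*} [CommRing k] [Group G] [Fintype G]
    [AddCommGroup P] [Module k P] [Module (MonoidAlgebra k G) P]
    [IsScalarTower k (MonoidAlgebra k G) P] (r : P →ₗ[k] MonoidAlgebra k G) :
    ∃ ρ : P →ₗ[MonoidAlgebra k G] MonoidAlgebra k G,
      ∀ p h, (ρ p).coeff h = (r (single h⁻¹ (1 : k) • p)).coeff 1 := by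
  classical
  let ρ₀ : P →ₗ[k] MonoidAlgebra k G :=
    { toFun := fun p => ofCoeff (Finsupp.equivFunOnFinite.symm
        fun h => (r (single h⁻¹ (1 : k) • p)).coeff 1)
      map_add' := by
        intro p q
        ext h
        simp
      map_smul' := by
        intro c p
        ext h
        simp [smul_comm _ c p] }
  have h0 : ∀ p h, (ρ₀ p).coeff h = (r (single h⁻¹ (1 : k) • p)).coeff 1 := fun p h => rfl
  refine ⟨equivariantOfLinearOfComm ρ₀ ?_, fun p h => h0 p h⟩
  intro g v
  ext h
  rw [smul_eq_mul, coeff_single_mul_apply, h0, h0, smul_smul, single_mul_single]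
  simp

theorem aux_projective {k M : Type*} [CommRing k] [IsDomain k] [IsDedekindDomain k]
    [AddCommGroup M] [Module k M] [Module.Finite k M] [Module.IsTorsionFree k M] :
    Module.Projective k M := by
  have : Module.Flat k M := inferInstance
  have : Module.FinitePresentation k M := Module.finitePresentation_of_finite k M
  exact Module.Flat.projective_of_finitePresentation

theorem aux_split {k G E M C : Type*} [CommRing k] [Group G] [Fintype G]
    [AddCommGroup E] [Module k E] [Module (MonoidAlgebra k G) E]
    [IsScalarTower k (MonoidAlgebra k G) E]
    [AddCommGroup M] [Module k M] [Module (MonoidAlgebra k G) M]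
    [IsScalarTower k (MonoidAlgebra k G) M] [Module.Projective k M]
    (f : MonoidAlgebra k G →ₗ[MonoidAlgebra k G] E) (hf : Function.Injective f)
    [AddCommGroup C] [Module (MonoidAlgebra k G) C] (q : E →ₗ[MonoidAlgebra k G] C)
    (hq : Function.Surjective q) (hqf : LinearMap.ker q = LinearMap.range f)
    (g : M →ₗ[MonoidAlgebra k G] C) :
    ∃ s : M →ₗ[MonoidAlgebra k G] E, ∀ m, q (s m) = g m := by
  let : Module k C := Module.compHom C (algebraMap k (MonoidAlgebra k G))
  have : IsScalarTower k (MonoidAlgebra k G) C := IsScalarTower.of_algebraMap_smul fun _ _ => rfl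
  obtain ⟨s, hs⟩ := Module.projective_lifting_property
    (q.restrictScalars k) (g.restrictScalars k) hq
  replace hs : ∀ m, q (s m) = g m := fun m => LinearMap.congr_fun hs m
  let P : Submodule (MonoidAlgebra k G) (M × E) :=
    LinearMap.ker (g ∘ₗ LinearMap.fst _ M E - q ∘ₗ LinearMap.snd _ M E)
  have hP : ∀ p : M × E, p ∈ P ↔ g p.1 = q p.2 := by
    intro p
    simp only [P, LinearMap.mem_ker, LinearMap.sub_apply, LinearMap.comp_apply,
      LinearMap.fst_apply, LinearMap.snd_apply, sub_eq_zero]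
  let d : P →ₗ[k] E :=
    (LinearMap.snd k M E - s ∘ₗ LinearMap.fst k M E) ∘ₗ (P.subtype.restrictScalars k)
  have hd : ∀ p : P, d p = p.1.2 - s p.1.1 := fun p => rfl
  have hd' : ∀ p : P, ∃ x, f x = d p := by
    intro p
    have : d p ∈ LinearMap.range f := by
      rw [← hqf, LinearMap.mem_ker, hd, map_sub, hs,
        ← (hP p.1).1 p.2, sub_self]
    exact this
  choose r₀ hr₀ using hd'
  let r : P →ₗ[k] MonoidAlgebra k G :=
    { toFun := r₀
      map_add' := fun p q => hf (by simp [hr₀])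
      map_smul' := fun c p => hf (by
        have := (f.restrictScalars k).map_smul c (r₀ p)
        simp only [LinearMap.restrictScalars_apply] at this
        rw [RingHom.id_apply, this, hr₀, hr₀, map_smul]) }
  have hr : ∀ p, f (r p) = p.1.2 - s p.1.1 := hr₀
  obtain ⟨ρ, hρ⟩ := aux_equivariant r
  let ψ : P →ₗ[MonoidAlgebra k G] E := LinearMap.snd _ M E ∘ₗ P.subtype - f ∘ₗ ρ
  let π : P →ₗ[MonoidAlgebra k G] M := LinearMap.fst _ M E ∘ₗ P.subtype
  have hψ : ∀ p : P, ψ p = p.1.2 - f (ρ p) := fun p => rfl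
  have hπ : ∀ p : P, π p = p.1.1 := fun p => rfl
  have hsurj : Function.Surjective π := fun m => ⟨⟨(m, s m), (hP _).2 (hs m).symm⟩, rfl⟩
  have hker : LinearMap.ker π ≤ LinearMap.ker ψ := by
    intro p hp
    rw [LinearMap.mem_ker, hπ] at hp
    rw [LinearMap.mem_ker, hψ, sub_eq_zero]
    have h1 : f (r p) = p.1.2 := by rw [hr, hp, map_zero, sub_zero]
    have h2 : ρ p = r p := by
      ext h
      rw [hρ]
      have : r (MonoidAlgebra.single h⁻¹ (1 : k) • p) = MonoidAlgebra.single h⁻¹ (1 : k) • r p := by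
        apply hf
        rw [hr, map_smul, h1]
        simp [hp]
      rw [this, smul_eq_mul, MonoidAlgebra.coeff_single_mul_apply]
      simp
    rw [h2, h1]
  refine ⟨(LinearMap.ker π).liftQ ψ hker ∘ₗ (π.quotKerEquivOfSurjective hsurj).symm.toLinearMap, ?_⟩
  intro m
  obtain ⟨p, rfl⟩ := hsurj m
  have : (π.quotKerEquivOfSurjective hsurj).symm (π p) = (LinearMap.ker π).mkQ p := by
    rw [LinearEquiv.symm_apply_eq]; rfl
  simp only [LinearMap.comp_apply, LinearEquiv.coe_coe, this]
  rw [Submodule.mkQ_apply, Submodule.liftQ_apply, hψ, map_sub, ← (hP p.1).1 p.2, hπ]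
  have h0 : f (ρ p) ∈ LinearMap.ker q := hqf ▸ LinearMap.mem_range_self f _
  rw [LinearMap.mem_ker.1 h0, sub_zero]

/-- For a Dedekind domain `k` and finite group `G`, the group ring `k[G]` has left
self-injective dimension at most 1. -/
theorem groupRing_selfinjdim_le_one (k : Type u) [CommRing k] [IsDomain k]
    [IsDedekindDomain k] (G : Type u) [Group G] [Fintype G]
    (E : Type u) [AddCommGroup E] [Module (MonoidAlgebra k G) E]
    [Module.Injective (MonoidAlgebra k G) E]
    (f : MonoidAlgebra k G →ₗ[MonoidAlgebra k G] E) (hf : Function.Injective f) :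
    Module.Injective (MonoidAlgebra k G) (E ⧸ LinearMap.range f) := by
  letI : Module k E := Module.compHom E (algebraMap k (MonoidAlgebra k G))
  haveI : IsScalarTower k (MonoidAlgebra k G) E := IsScalarTower.of_algebraMap_smul fun _ _ => rfl
  apply Module.Baer.injective
  intro I g
  have hfree : Module.Finite k (MonoidAlgebra k G) :=
    Module.Finite.equiv (MonoidAlgebra.coeffLinearEquiv (M := G) (S := k) k).symm
  have htf : Module.IsTorsionFree k (MonoidAlgebra k G) := inferInstance
  have : Module.Finite k I :=
    inferInstanceAs (Module.Finite k (I.restrictScalars k))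
  have : Module.IsTorsionFree k I :=
    inferInstanceAs (Module.IsTorsionFree k (I.restrictScalars k))
  have : Module.Projective k I := aux_projective
  obtain ⟨s, hs⟩ := aux_split (k := k) f hf (LinearMap.range f).mkQ
    (Submodule.mkQ_surjective _) (Submodule.ker_mkQ _) g
  obtain ⟨t, ht⟩ := Module.Baer.of_injective (R := MonoidAlgebra k G) (Q := E) ‹_› I s
  refine ⟨(LinearMap.range f).mkQ ∘ₗ t, fun x mem => ?_⟩
  rw [LinearMap.comp_apply, ht x mem, hs]
end
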